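/- arXiv:math/0512085 — 5 statements merged into one kernel-verified Lean document; each statement's English description precedes it below -/
import Mathlib

section
/- Let p be an odd prime and let B be a finite-dimensional 𝔽_p-vector space equipped with a nondegenerate symmetric 𝔽_p-bilinear form β. Suppose C, C_F, C_G are subspaces of B, each equal to its own orthogonal complement with respect to β, and suppose B is the internal direct sum of C_F and C_G. Then the 𝔽_p-dimension of the quotient C / ((C ∩ C_F) + (C ∩ C_G)) is even. -/
/-!
Write `x = x_F + x_G` along `B = C_F ⊕ C_G` and consider the pairing `[x, y] = β x_F y_G`. As `C_F`
and `C_G` are isotropic, `β x y = [x, y] + [y, x]`, so the pairing is skew-symmetric on `C`, where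
`β` vanishes. Moreover `[x, y] = β x_F y`, so `x ∈ C` lies in the radical of the pairing on `C` iff
`x_F ∈ C^⊥ = C`, that is, iff `x ∈ (C ∩ C_F) + (C ∩ C_G)`. The pairing thus descends to a
nondegenerate skew-symmetric form on the quotient, whose dimension is even because a skew-symmetric
matrix of odd size is singular away from characteristic two.
-/

open LinearMap (BilinForm)
open Module (finrank)

section SkewSymmetric

theorem det_eq_zero_of_transpose_eq_neg {n R : Type*} [Fintype n] [DecidableEq n] [CommRing R]
    [NoZeroDivisors R] [NeZero (2 : R)] {M : Matrix n n R} (hM : M.transpose = -M)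
    (hn : Odd (Fintype.card n)) : M.det = 0 := by
  have hdet : M.det = -M.det := by
    calc M.det = M.transpose.det := M.det_transpose.symm
      _ = -M.det := by rw [hM, Matrix.det_neg, hn.neg_one_pow, neg_one_mul]
  have htwo : 2 * M.det = 0 := by linear_combination hdet
  exact (mul_eq_zero.mp htwo).resolve_left two_ne_zero

variable {K V : Type*} [Field K] [AddCommGroup V] [Module K V]

theorem even_finrank_of_nondegenerate_of_skew [NeZero (2 : K)] [FiniteDimensional K V]
    {ω : BilinForm K V} (hω : ω.Nondegenerate) (hskew : ∀ x y, ω x y = -ω y x) :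
    Even (finrank K V) := by
  let b := Module.finBasis K V
  let A := LinearMap.BilinForm.toMatrix b ω
  have htranspose : A.transpose = -A := by
    ext i j
    simpa only [A, Matrix.transpose_apply, Matrix.neg_apply, LinearMap.BilinForm.toMatrix_apply]
      using hskew (b j) (b i)
  by_contra hodd
  refine (LinearMap.BilinForm.nondegenerate_iff_det_ne_zero b).mp hω
    (det_eq_zero_of_transpose_eq_neg htranspose ?_)
  rwa [Fintype.card_fin, ← Nat.not_even_iff_odd]

theorem nondegenerate_restrict_of_isCompl_ker {R M : Type*} [CommRing R] [AddCommGroup M]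
    [Module R M] {ω : BilinForm R M} (hω : ω.IsRefl) {W : Submodule R M}
    (hW : IsCompl (LinearMap.ker ω) W) : (ω.restrict W).Nondegenerate := by
  refine ω.nondegenerate_restrict_of_disjoint_orthogonal hω
    (Submodule.disjoint_def.mpr fun x hxW hxorth => ?_)
  have hker : LinearMap.ker ω ≤ LinearMap.ker (ω.flip x) := fun y hy =>
    LinearMap.congr_fun hy x
  have htop : LinearMap.ker (ω.flip x) = ⊤ :=
    top_le_iff.mp (hW.sup_eq_top.ge.trans (sup_le hker hxorth))
  have hx : x ∈ LinearMap.ker ω := LinearMap.ext fun y =>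
    hω y x (htop.ge (Submodule.mem_top : y ∈ ⊤))
  exact Submodule.disjoint_def.mp hW.disjoint x hx hxW

theorem even_finrank_quotient_ker_of_skew [NeZero (2 : K)] {ω : BilinForm K V}
    [FiniteDimensional K (V ⧸ LinearMap.ker ω)] (hskew : ∀ x y, ω x y = -ω y x) :
    Even (finrank K (V ⧸ LinearMap.ker ω)) := by
  obtain ⟨W, hW⟩ := (LinearMap.ker ω).exists_isCompl
  let e := Submodule.quotientEquivOfIsCompl (LinearMap.ker ω) W hW
  have : FiniteDimensional K W := e.finiteDimensional
  have hrefl : ω.IsRefl := fun x y hxy => by rw [hskew, hxy, neg_zero]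
  rw [e.finrank_eq]
  exact even_finrank_of_nondegenerate_of_skew (nondegenerate_restrict_of_isCompl_ker hrefl hW)
    fun x y => hskew x y

end SkewSymmetric

theorem mem_inf_sup_inf_iff_projection_mem {R M : Type*} [Ring R] [AddCommGroup M] [Module R M]
    {C F G : Submodule R M} (hFG : IsCompl F G) {x : M} (hx : x ∈ C) :
    x ∈ C ⊓ F ⊔ C ⊓ G ↔ F.projection G hFG x ∈ C := by
  constructor
  · intro hsup
    obtain ⟨a, ⟨haC, haF⟩, b, ⟨-, hbG⟩, rfl⟩ := Submodule.mem_sup.mp hsup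
    rwa [map_add, Submodule.projection_apply_of_mem_left hFG haF,
      (Submodule.projection_apply_eq_zero_iff hFG).mpr hbG, add_zero]
  · intro hproj
    exact Submodule.mem_sup.mpr ⟨_, ⟨hproj, Submodule.projection_apply_mem hFG x⟩, _,
      ⟨C.sub_mem hx hproj, Submodule.sub_projection_mem hFG x⟩, add_sub_cancel _ _⟩

section SplitPairing

variable {R B : Type*} [CommRing R] [AddCommGroup B] [Module R B] {C F G : Submodule R B}

/-- The pairing `[x, y] = β x_F y_G`, where `x = x_F + x_G` is the decomposition along `B = F ⊕ G`.
It is defined on all of `B`; Howard's pairing is its restriction to `C`. -/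
noncomputable def splitPairing (β : BilinForm R B) (hFG : IsCompl F G) : BilinForm R B :=
  β.compl₁₂ (F.projection G hFG) (G.projection F hFG.symm)

variable {β : BilinForm R B}

theorem splitPairing_apply (hFG : IsCompl F G) (x y : B) :
    splitPairing β hFG x y = β (F.projection G hFG x) (G.projection F hFG.symm y) :=
  rfl

theorem splitPairing_eq_apply_projection (hFG : IsCompl F G) (hF : F ≤ β.orthogonal F) (x y : B) :
    splitPairing β hFG x y = β (F.projection G hFG x) y := by
  have hzero : β (F.projection G hFG x) (F.projection G hFG y) = 0 :=
    hF (Submodule.projection_apply_mem hFG y) _ (Submodule.projection_apply_mem hFG x)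
  conv_rhs => rw [← Submodule.projection_add_projection_eq_self hFG y]
  rw [map_add, hzero, zero_add, splitPairing_apply]

theorem splitPairing_swap (hβ : β.IsSymm) (hFG : IsCompl F G) (x y : B) :
    splitPairing β hFG y x = splitPairing β hFG.symm x y :=
  hβ.eq _ _

theorem splitPairing_add_swap (hβ : β.IsSymm) (hFG : IsCompl F G) (hF : F ≤ β.orthogonal F)
    (hG : G ≤ β.orthogonal G) (x y : B) :
    splitPairing β hFG x y + splitPairing β hFG y x = β x y := by
  rw [splitPairing_swap hβ hFG x y, splitPairing_eq_apply_projection hFG hF,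
    splitPairing_eq_apply_projection hFG.symm hG, ← LinearMap.add_apply, ← map_add,
    Submodule.projection_add_projection_eq_self]

theorem ker_restrict_splitPairing (hβ : β.IsSymm) (hFG : IsCompl F G) (hF : F ≤ β.orthogonal F)
    (hC : β.orthogonal C = C) :
    LinearMap.ker ((splitPairing β hFG).restrict C) =
      Submodule.comap C.subtype (C ⊓ F ⊔ C ⊓ G) := by
  ext x
  calc x ∈ LinearMap.ker ((splitPairing β hFG).restrict C)
      ↔ ∀ y ∈ C, splitPairing β hFG x y = 0 := by simp [LinearMap.ext_iff]
    _ ↔ ∀ y ∈ C, β y (F.projection G hFG x) = 0 := by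
      simp only [splitPairing_eq_apply_projection hFG hF, hβ.eq]
    _ ↔ F.projection G hFG x ∈ β.orthogonal C := LinearMap.BilinForm.mem_orthogonal_iff.symm
    _ ↔ F.projection G hFG x ∈ C := by rw [hC]
    _ ↔ (x : B) ∈ C ⊓ F ⊔ C ⊓ G := (mem_inf_sup_inf_iff_projection_mem hFG x.2).symm

end SplitPairing

theorem stmt_0_general {K B : Type*} [Field K] [NeZero (2 : K)] [AddCommGroup B] [Module K B]
    {β : BilinForm K B} (hβ : β.IsSymm) {C F G : Submodule K B} (hC : β.orthogonal C = C)
    (hF : F ≤ β.orthogonal F) (hG : G ≤ β.orthogonal G) (hFG : IsCompl F G)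
    [FiniteDimensional K (C ⧸ Submodule.comap C.subtype (C ⊓ F ⊔ C ⊓ G))] :
    Even (finrank K (C ⧸ Submodule.comap C.subtype (C ⊓ F ⊔ C ⊓ G))) := by
  have hskew (x y : C) : (splitPairing β hFG).restrict C x y =
      -(splitPairing β hFG).restrict C y x := by
    have hzero : β x y = 0 := hC.ge y.2 x x.2
    exact eq_neg_of_add_eq_zero_left
      ((splitPairing_add_swap hβ hFG hF hG x y).trans hzero)
  have hker := ker_restrict_splitPairing hβ hFG hF hC
  have : FiniteDimensional K (C ⧸ LinearMap.ker ((splitPairing β hFG).restrict C)) := by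
    rwa [hker]
  rw [← hker]
  exact even_finrank_quotient_ker_of_skew hskew

/-- Howard's linear-algebra lemma: if `B` is a finite-dimensional
vector space over `𝔽_p` (`p` an odd prime) with a nondegenerate symmetric bilinear
form `β`, and `C`, `CF`, `CG` are subspaces each equal to its own orthogonal
complement, with `B` the internal direct sum of `CF` and `CG`, then
`dim C / ((C ∩ CF) + (C ∩ CG))` is even. -/
theorem stmt_0 (p : ℕ) [Fact p.Prime] (hodd : Odd p)
    (B : Type) [AddCommGroup B] [Module (ZMod p) B] [FiniteDimensional (ZMod p) B]
    (β : LinearMap.BilinForm (ZMod p) B)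
    (hsymm : ∀ x y : B, β x y = β y x)
    (hnd : β.Nondegenerate)
    (C CF CG : Submodule (ZMod p) B)
    (hC : β.orthogonal C = C) (hCF : β.orthogonal CF = CF) (hCG : β.orthogonal CG = CG)
    (hcompl : IsCompl CF CG) :
    Even (Module.finrank (ZMod p)
      (↥C ⧸ Submodule.comap C.subtype (C ⊓ CF ⊔ C ⊓ CG))) := by
  have hp : p ≠ 2 := hodd.ne_two_of_dvd_nat dvd_rfl
  have : NeZero (2 : ZMod p) := ⟨Ring.two_ne_zero (by rwa [ZMod.ringChar_zmod_n])⟩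
  exact stmt_0_general ⟨hsymm⟩ hC hCF.ge hCG.ge hcompl
end

section
/- With the data and global duality hypothesis of the abstract Selmer setup, the subspace Sel(F∩G) is exactly the kernel of the map Sel(F+G) → B̄, and dim_{𝔽_p} Sel(F+G)/Sel(F∩G) = Σ_{v∈S} dim_{𝔽_p} F_v/(F_v ∩ G_v). -/
open Module Submodule

/-!
The images of the `F v` in `B̄ = ⨁ v, (F v + G v) / (F v ∩ G v)` form a product subspace which, like
the image `C` of `Sel(F + G)`, is its own orthogonal complement. No nonzero vector of `B̄` is
orthogonal to all of `B̄`, so both subspaces have half its dimension. The first has dimension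
`∑ v, dim F v / (F v ∩ G v)`, and `C` is `Sel(F + G) / Sel(F ∩ G)`.
-/

section Lagrangian

variable {K V : Type*} [Field K] [AddCommGroup V] [Module K V] [FiniteDimensional K V]

theorem two_mul_finrank_of_orthogonal_eq_self {β : LinearMap.BilinForm K V}
    (hβ : β.orthogonal ⊤ = ⊥) {L : Submodule K V} (hL : β.orthogonal L = L) :
    2 * finrank K L = finrank K V := by
  -- `β.orthogonal ⊤` is the right radical and `β.ker` the left one; they have equal dimension.
  have ker_eq_bot : β.ker = ⊥ := by
    have h := LinearMap.BilinForm.finrank_add_finrank_orthogonal' (B := β) ⊤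
    rw [hβ, finrank_bot, top_inf_eq, finrank_top, Nat.add_left_cancel_iff] at h
    exact Submodule.finrank_eq_zero.1 h.symm
  have h := LinearMap.BilinForm.finrank_add_finrank_orthogonal' (B := β) L
  rwa [hL, ker_eq_bot, inf_bot_eq, finrank_bot, add_zero, ← two_mul] at h

theorem finrank_eq_of_orthogonal_eq_self {β : LinearMap.BilinForm K V}
    (hβ : β.orthogonal ⊤ = ⊥) {L M : Submodule K V}
    (hL : β.orthogonal L = L) (hM : β.orthogonal M = M) : finrank K L = finrank K M :=
  Nat.eq_of_mul_eq_mul_left two_pos <|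
    (two_mul_finrank_of_orthogonal_eq_self hβ hL).trans
      (two_mul_finrank_of_orthogonal_eq_self hβ hM).symm

end Lagrangian

section Product

variable {ι R : Type*} {V : ι → Type*} [Fintype ι] [∀ i, AddCommGroup (V i)]

theorem orthogonal_pi_univ [CommRing R] [∀ i, Module R (V i)]
    {β : ∀ i, LinearMap.BilinForm R (V i)} {βtot : LinearMap.BilinForm R (∀ i, V i)}
    (hβtot : ∀ x y, βtot x y = ∑ i, β i (x i) (y i)) (W : ∀ i, Submodule R (V i)) :
    βtot.orthogonal (pi Set.univ W) = pi Set.univ fun i ↦ (β i).orthogonal (W i) := by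
  classical
  ext y
  simp only [LinearMap.BilinForm.mem_orthogonal_iff, hβtot, mem_pi, Set.mem_univ, true_imp_iff]
  refine ⟨fun h i w hw ↦ ?_, fun h x hx ↦ Finset.sum_eq_zero fun i _ ↦ h i (x i) (hx i)⟩
  have single_mem : ∀ j, Pi.single (M := V) i w j ∈ W j := fun j ↦ by
    obtain rfl | hij := eq_or_ne j i <;> simp [*]
  have h_single := h (Pi.single i w) single_mem
  rwa [Finset.sum_eq_single_of_mem i (Finset.mem_univ i) fun j _ hij ↦ by simp [hij],
    Pi.single_eq_same] at h_single

theorem finrank_pi_univ [DivisionRing R] [∀ i, Module R (V i)]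
    (W : ∀ i, Submodule R (V i)) [∀ i, Module.Finite R (W i)] :
    finrank R (pi Set.univ W) = ∑ i, finrank R (W i) := by
  let e : pi Set.univ W ≃ₗ[R] ∀ i, W i :=
    { toFun x i := ⟨x.1 i, x.2 i trivial⟩
      invFun y := ⟨fun i ↦ y i, fun i _ ↦ (y i).2⟩
      map_add' _ _ := rfl
      map_smul' _ _ := rfl }
  rw [e.finrank_eq, finrank_pi_fintype]

end Product

section Subquotient

variable {R M : Type*} [CommRing R] [AddCommGroup M] [Module R M]

/-- The image of `X ∩ D` in `D / (N ∩ D)`. For `N = F ∩ G` and `D = F + G` it gives the image of `F`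
in `(F + G) / (F ∩ G)`. -/
def subquotientImage (N D X : Submodule R M) : Submodule R (D ⧸ N.submoduleOf D) :=
  (X.submoduleOf D).map (N.submoduleOf D).mkQ

theorem subquotientImage_self_right (N D : Submodule R M) : subquotientImage N D D = ⊤ := by
  rw [subquotientImage, submoduleOf_self, Submodule.map_top, range_mkQ]

theorem subquotientImage_self_left (N D : Submodule R M) : subquotientImage N D N = ⊥ :=
  mkQ_map_self _

theorem finrank_subquotientImage {N D X : Submodule R M} (hXD : X ≤ D) :
    finrank R (subquotientImage N D X) = finrank R (X ⧸ N.submoduleOf X) := by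
  let f := (N.submoduleOf D).mkQ ∘ₗ inclusion hXD
  have ker_f : LinearMap.ker f = N.submoduleOf X := by
    rw [LinearMap.ker_comp, ker_mkQ]
    rfl
  have range_f : LinearMap.range f = subquotientImage N D X := by
    rw [LinearMap.range_comp, range_inclusion]
    rfl
  rw [← range_f, ← ker_f, f.quotKerEquivRange.finrank_eq]

theorem orthogonal_subquotientImage {β : LinearMap.BilinForm R M} {N D X : Submodule R M}
    {βbar : LinearMap.BilinForm R (D ⧸ N.submoduleOf D)}
    (hβbar : ∀ x y : D, βbar (Submodule.Quotient.mk x) (Submodule.Quotient.mk y) = β x y)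
    (hXD : X ≤ D) :
    βbar.orthogonal (subquotientImage N D X) = subquotientImage N D (β.orthogonal X) := by
  have comap_mkQ : (βbar.orthogonal (subquotientImage N D X)).comap (N.submoduleOf D).mkQ =
      (β.orthogonal X).submoduleOf D := by
    ext y
    constructor
    · intro hy x hx
      exact (hβbar ⟨x, hXD hx⟩ y).symm.trans (hy _ (mem_map_of_mem (f := mkQ _) hx))
    · rintro hy _ ⟨x, hx, rfl⟩
      exact (hβbar x y).trans (hy x hx)
  rw [subquotientImage.eq_def N D (β.orthogonal X), ← comap_mkQ,
    map_comap_eq_of_surjective (mkQ_surjective _)]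

theorem orthogonal_top_subquotient_eq_bot {β : LinearMap.BilinForm R M} {F G : Submodule R M}
    {βbar : LinearMap.BilinForm R (↥(F ⊔ G) ⧸ (F ⊓ G).submoduleOf (F ⊔ G))}
    (hβbar : ∀ x y : ↥(F ⊔ G),
      βbar (Submodule.Quotient.mk x) (Submodule.Quotient.mk y) = β x y)
    (hF : β.orthogonal F = F) (hG : β.orthogonal G = G) :
    βbar.orthogonal ⊤ = ⊥ := by
  have orthogonal_sup_le : β.orthogonal (F ⊔ G) ≤ F ⊓ G :=
    le_inf ((LinearMap.BilinForm.orthogonal_le le_sup_left).trans hF.le)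
      ((LinearMap.BilinForm.orthogonal_le le_sup_right).trans hG.le)
  rw [← subquotientImage_self_right, orthogonal_subquotientImage hβbar le_rfl, eq_bot_iff,
    ← subquotientImage_self_left]
  exact map_mono (comap_mono orthogonal_sup_le)

end Subquotient

section Selmer

variable {ι K H : Type*} {B : ι → Type*} [Field K] [∀ v, AddCommGroup (B v)]
  [∀ v, Module K (B v)] [AddCommGroup H] [Module K H]

/-- The Selmer group `Sel(D)` of the local conditions `D v ⊆ B v`: the global classes whose
localization at each `v` lies in `D v`. -/
def selmerGroup (loc : ∀ v, H →ₗ[K] B v) (D : ∀ v, Submodule K (B v)) : Submodule K H :=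
  ⨅ v, (D v).comap (loc v)

theorem mem_selmerGroup {loc : ∀ v, H →ₗ[K] B v} {D : ∀ v, Submodule K (B v)} {x : H} :
    x ∈ selmerGroup loc D ↔ ∀ v, loc v x ∈ D v :=
  mem_iInf _

theorem ker_selmerGroup_localization {loc : ∀ v, H →ₗ[K] B v} {N D : ∀ v, Submodule K (B v)}
    {φ : selmerGroup loc D →ₗ[K] ∀ v, D v ⧸ (N v).submoduleOf (D v)}
    (hφ : ∀ x v, φ x v = Submodule.Quotient.mk ⟨loc v x, mem_selmerGroup.1 x.2 v⟩) :
    LinearMap.ker φ = (selmerGroup loc N).submoduleOf (selmerGroup loc D) := by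
  ext x
  calc x ∈ LinearMap.ker φ
    _ ↔ ∀ v, φ x v = 0 := funext_iff
    _ ↔ ∀ v, loc v x ∈ N v :=
      forall_congr' fun v ↦ by rw [hφ, Submodule.Quotient.mk_eq_zero]; rfl
    _ ↔ x ∈ (selmerGroup loc N).submoduleOf (selmerGroup loc D) := mem_selmerGroup.symm

theorem stmt_1_general [Fintype ι] (β : ∀ v, LinearMap.BilinForm K (B v))
    (F G : ∀ v, Submodule K (B v))
    [∀ v, FiniteDimensional K (↥(F v ⊔ G v) ⧸ (F v ⊓ G v).submoduleOf (F v ⊔ G v))]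
    (hF : ∀ v, (β v).orthogonal (F v) = F v) (hG : ∀ v, (β v).orthogonal (G v) = G v)
    (loc : ∀ v, H →ₗ[K] B v)
    (βbar : ∀ v, LinearMap.BilinForm K (↥(F v ⊔ G v) ⧸ (F v ⊓ G v).submoduleOf (F v ⊔ G v)))
    (hβbar : ∀ v (x y : ↥(F v ⊔ G v)),
      βbar v (Submodule.Quotient.mk x) (Submodule.Quotient.mk y) = β v x y)
    (φ : selmerGroup loc (fun v ↦ F v ⊔ G v) →ₗ[K]
      ∀ v, ↥(F v ⊔ G v) ⧸ (F v ⊓ G v).submoduleOf (F v ⊔ G v))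
    (hφ : ∀ x v, φ x v = Submodule.Quotient.mk ⟨loc v x, mem_selmerGroup.1 x.2 v⟩)
    (βtot : LinearMap.BilinForm K (∀ v, ↥(F v ⊔ G v) ⧸ (F v ⊓ G v).submoduleOf (F v ⊔ G v)))
    (hβtot : ∀ x y, βtot x y = ∑ v, βbar v (x v) (y v))
    (hdual : βtot.orthogonal (LinearMap.range φ) = LinearMap.range φ) :
    LinearMap.ker φ = (selmerGroup loc fun v ↦ F v ⊓ G v).submoduleOf
        (selmerGroup loc fun v ↦ F v ⊔ G v) ∧
      finrank K (↥(selmerGroup loc fun v ↦ F v ⊔ G v) ⧸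
        (selmerGroup loc fun v ↦ F v ⊓ G v).submoduleOf (selmerGroup loc fun v ↦ F v ⊔ G v)) =
      ∑ v, finrank K (F v ⧸ (F v ⊓ G v).submoduleOf (F v)) := by
  have ker_φ := ker_selmerGroup_localization hφ
  refine ⟨ker_φ, ?_⟩
  let L := fun v ↦ subquotientImage (F v ⊓ G v) (F v ⊔ G v) (F v)
  have orthogonal_L : βtot.orthogonal (pi Set.univ L) = pi Set.univ L := by
    rw [orthogonal_pi_univ hβtot]
    simp only [L, orthogonal_subquotientImage (hβbar _) le_sup_left, hF]
  have orthogonal_top : βtot.orthogonal ⊤ = ⊥ := by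
    rw [← pi_top Set.univ, orthogonal_pi_univ hβtot]
    simp only [orthogonal_top_subquotient_eq_bot (hβbar _) (hF _) (hG _), pi_univ_bot]
  calc
    _ = finrank K (LinearMap.range φ) := by rw [← ker_φ, φ.quotKerEquivRange.finrank_eq]
    _ = finrank K (pi Set.univ L) :=
      finrank_eq_of_orthogonal_eq_self orthogonal_top hdual orthogonal_L
    _ = ∑ v, finrank K (L v) := finrank_pi_univ L
    _ = ∑ v, finrank K (F v ⧸ (F v ⊓ G v).submoduleOf (F v)) :=
      Finset.sum_congr rfl fun v _ ↦ finrank_subquotientImage le_sup_left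

end Selmer

/-- Abstract Selmer setup: `Sel(F∩G)` is the kernel of the
localization map `Sel(F+G) → B̄`, and
`dim Sel(F+G)/Sel(F∩G) = Σ_{v∈S} dim F_v/(F_v ∩ G_v)`. -/
theorem stmt_1
    (p : ℕ) [Fact p.Prime] (hodd : Odd p)
    (ι : Type) [Fintype ι]
    (B : ι → Type) [∀ v, AddCommGroup (B v)] [∀ v, Module (ZMod p) (B v)]
    [∀ v, FiniteDimensional (ZMod p) (B v)]
    (β : ∀ v, LinearMap.BilinForm (ZMod p) (B v))
    (hβsymm : ∀ v (x y : B v), β v x y = β v y x)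
    (hβnd : ∀ v, (β v).Nondegenerate)
    (F G : ∀ v, Submodule (ZMod p) (B v))
    (hF : ∀ v, (β v).orthogonal (F v) = F v)
    (hG : ∀ v, (β v).orthogonal (G v) = G v)
    (H : Type) [AddCommGroup H] [Module (ZMod p) H]
    (loc : ∀ v, H →ₗ[ZMod p] B v)
    -- the forms induced by the `β v` on the quotients `(F_v + G_v)/(F_v ∩ G_v)`
    (βbar : ∀ v, LinearMap.BilinForm (ZMod p)
      (↥(F v ⊔ G v) ⧸ Submodule.comap (F v ⊔ G v).subtype (F v ⊓ G v)))
    (hβbar : ∀ v (x y : ↥(F v ⊔ G v)),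
      βbar v (Submodule.Quotient.mk x) (Submodule.Quotient.mk y) = β v x y)
    -- the localization map `φ : Sel(F+G) → B̄ = ⊕_v (F_v + G_v)/(F_v ∩ G_v)`
    (φ : ↥(⨅ v, Submodule.comap (loc v) (F v ⊔ G v)) →ₗ[ZMod p]
      ∀ v, ↥(F v ⊔ G v) ⧸ Submodule.comap (F v ⊔ G v).subtype (F v ⊓ G v))
    (hφ : ∀ x v, φ x v = Submodule.Quotient.mk
      ⟨loc v x, by exact (Submodule.mem_iInf _).mp x.2 v⟩)
    -- the orthogonal direct-sum form on `B̄`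
    (βtot : LinearMap.BilinForm (ZMod p)
      (∀ v, ↥(F v ⊔ G v) ⧸ Submodule.comap (F v ⊔ G v).subtype (F v ⊓ G v)))
    (hβtot : ∀ x y, βtot x y = ∑ v, βbar v (x v) (y v))
    -- global duality hypothesis: the image `C` of `Sel(F+G)` in `B̄` is its own
    -- orthogonal complement
    (hdual : βtot.orthogonal (LinearMap.range φ) = LinearMap.range φ) :
    LinearMap.ker φ =
      Submodule.comap (⨅ v, Submodule.comap (loc v) (F v ⊔ G v)).subtype
        (⨅ v, Submodule.comap (loc v) (F v ⊓ G v)) ∧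
    finrank (ZMod p)
      (↥(⨅ v, Submodule.comap (loc v) (F v ⊔ G v)) ⧸
        Submodule.comap (⨅ v, Submodule.comap (loc v) (F v ⊔ G v)).subtype
          (⨅ v, Submodule.comap (loc v) (F v ⊓ G v))) =
    ∑ v, finrank (ZMod p) (↥(F v) ⧸ Submodule.comap (F v).subtype (F v ⊓ G v)) :=
  stmt_1_general β F G hF hG loc βbar hβbar φ hφ βtot hβtot hdual
end

section
/- Let A be a commutative ring, R a commutative A-algebra that is free of finite rank as an A-module, τ : R → A an A-linear map such that the A-bilinear form (r,s) ↦ τ(rs) on R is perfect, and ι an A-algebra involution of R. Let W be an R-module and B an A-module. Call a pairing e : W × W → R ⊗_A B R-semilinear if e(rx, y) = r·e(x,y) and e(x, ry) = ι(r)·e(x,y) for all r ∈ R, x,y ∈ W; call a pairing b : W × W → B ι-adjoint if it is A-bilinear and b(rx, y) = b(x, ι(r)y) for all r ∈ R, x,y ∈ W. Then composition with τ ⊗ id_B gives a bijection from the set of R-semilinear pairings W × W → R ⊗_A B onto the set of ι-adjoint pairings W × W → B; moreover an R-semilinear pairing e is perfect (meaning x ↦ e(x,·) is a bijection from W onto Hom_R(W^ι,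 R ⊗_A B), where W^ι denotes W with R acting through ι) if and only if the corresponding ι-adjoint pairing b is perfect (meaning x ↦ b(x,·) is a bijection from W onto Hom_A(W, B)). -/
open TensorProduct

/-!
Since `τ` is perfect and `R` is finite projective, `z ↦ (r ↦ (τ ⊗ id_B) (r • z))` is the
isomorphism `R ⊗ B ≅ Hom_A(R, A) ⊗ B ≅ Hom_A(R, B)`. Thus `R ⊗ B` is the coextension of scalars
of `B`, with counit `τ ⊗ id_B`, and composition with the counit identifies `ι`-semilinear maps
`V → R ⊗ B` with `A`-linear maps `V → B`. Applied to the maps `e(x, ·)`, this gives both the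
bijection between pairings and the comparison of perfectness.
-/

open Function

section Coextension

variable {A R M V B : Type*} [CommSemiring A] [Semiring R] [Algebra A R]
  [AddCommMonoid M] [Module A M] [Module R M] [IsScalarTower A R M]
  [AddCommMonoid V] [Module A V] [Module R V] [IsScalarTower A R V]
  [AddCommMonoid B] [Module A B]

variable (R) in
/-- The comparison map `m ↦ (r ↦ T (r • m))` from `M` to the coextension of scalars `Hom_A(R, B)`.
It is bijective exactly when `T` is the counit of a coextension of scalars of `B` to `R`. -/
def coextend (T : M →ₗ[A] B) : M →ₗ[A] R →ₗ[A] B :=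
  (Algebra.lsmul A A M).toLinearMap.flip.compr₂ T

@[simp]
theorem coextend_apply (T : M →ₗ[A] B) (m : M) (r : R) : coextend R T m r = T (r • m) := rfl

theorem semilinear_ext_of_coextend_injective {X : Type*} [SMul R X] {T : M →ₗ[A] B}
    (hT : Injective (coextend R T)) {ι : R → R} (hι : Surjective ι) {f g : X → M}
    (hf : ∀ (r : R) (y : X), f (r • y) = ι r • f y)
    (hg : ∀ (r : R) (y : X), g (r • y) = ι r • g y)
    (h : ∀ y, T (f y) = T (g y)) : f = g := by
  funext y
  refine hT (LinearMap.ext fun s => ?_)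
  obtain ⟨r, rfl⟩ := hι s
  simpa only [coextend_apply, hf, hg] using h (r • y)

theorem exists_semilinear_lift_of_coextend_bijective {T : M →ₗ[A] B}
    (hT : Bijective (coextend R T)) (ι : R ≃ₐ[A] R) (ψ : V →ₗ[A] B) :
    ∃ φ : V →ₗ[A] M, (∀ (r : R) (y : V), φ (r • y) = ι r • φ y) ∧ ∀ y, T (φ y) = ψ y := by
  let E := LinearEquiv.ofBijective (coextend R T) hT
  let φ : V →ₗ[A] M := E.symm.toLinearMap ∘ₗ (coextend R ψ).compl₂ ι.symm.toLinearMap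
  have hφ (y : V) (s : R) : T (s • φ y) = ψ (ι.symm s • y) :=
    LinearMap.congr_fun (E.apply_symm_apply ((coextend R ψ).compl₂ ι.symm.toLinearMap y)) s
  refine ⟨φ, fun r y => hT.1 (LinearMap.ext fun s => ?_), fun y => ?_⟩
  · simp only [coextend_apply, smul_smul, hφ, map_mul, AlgEquiv.symm_apply_apply]
  · simpa only [map_one, one_smul] using hφ y 1

theorem coextend_lid_comp_rTensor_bijective [Module.Projective A R] [Module.Finite A R]
    {τ : R →ₗ[A] A} (hτ : Bijective (coextend R τ)) :
    Bijective (coextend R ((TensorProduct.lid A B).toLinearMap ∘ₗ τ.rTensor B)) := by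
  have factorization : coextend R ((TensorProduct.lid A B).toLinearMap ∘ₗ τ.rTensor B) =
      dualTensorHom A R B ∘ₗ (coextend R τ).rTensor B := by
    ext s b r
    simp [TensorProduct.smul_tmul']
  rw [factorization, LinearMap.coe_comp]
  exact dualTensorHom_bijective.comp
    ((LinearEquiv.ofBijective (coextend R τ) hτ).rTensor B).bijective

end Coextension

section Pairing

variable {A R M W V B : Type*} [CommSemiring A] [CommSemiring R] [Algebra A R]
  [AddCommMonoid M] [Module A M] [Module R M]
  [AddCommMonoid W] [Module R W]
  [AddCommMonoid V] [Module A V] [Module R V]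
  [AddCommMonoid B] [Module A B]

/-- `R`-semilinear pairings: biadditive, `R`-linear in the first variable and `ι`-semilinear in
the second. -/
def IsSemilinearPairing (ι : R → R) (e : W → V → M) : Prop :=
  (∀ x x' y, e (x + x') y = e x y + e x' y) ∧
  (∀ x y y', e x (y + y') = e x y + e x y') ∧
  (∀ (r : R) (x : W) (y : V), e (r • x) y = r • e x y) ∧
  (∀ (r : R) (x : W) (y : V), e x (r • y) = ι r • e x y)

variable (A) in
/-- Perfectness of an `R`-semilinear pairing `e`: every `ι`-semilinear map `V → M`, i.e. every
`R`-linear map `V^ι → M`, is `e x` for a unique `x`. -/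
def IsSemilinearPerfect (ι : R → R) (e : W → V → M) : Prop :=
  ∀ φ : V →ₗ[A] M, (∀ (r : R) (y : V), φ (r • y) = ι r • φ y) → ∃! x : W, ∀ y, e x y = φ y

variable (A) in
/-- Perfectness of an `A`-bilinear pairing `b`: every `A`-linear map `V → B` is `b x` for a
unique `x`. -/
def IsLinearPerfect (b : W → V → B) : Prop :=
  ∀ ψ : V →ₗ[A] B, ∃! x : W, ∀ y, b x y = ψ y

variable [IsScalarTower A R M] [IsScalarTower A R V]

theorem IsSemilinearPairing.isSemilinearPerfect_iff {T : M →ₗ[A] B}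
    (hT : Bijective (coextend R T)) {ι : R ≃ₐ[A] R} {e : W → V → M}
    (he : IsSemilinearPairing ι e) :
    IsSemilinearPerfect A ι e ↔ IsLinearPerfect A fun x y => T (e x y) := by
  have eq_iff {φ : V →ₗ[A] M} (hφ : ∀ (r : R) (y : V), φ (r • y) = ι r • φ y) (x : W) :
      (∀ y, e x y = φ y) ↔ ∀ y, T (e x y) = T (φ y) :=
    ⟨fun h y => congrArg T (h y), fun h => congr_fun <|
      semilinear_ext_of_coextend_injective hT.1 ι.surjective (he.2.2.2 · x) hφ h⟩
  constructor
  · intro perfect ψ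
    obtain ⟨φ, hφ, hTφ⟩ := exists_semilinear_lift_of_coextend_bijective hT ι ψ
    simpa only [eq_iff hφ, hTφ] using perfect φ hφ
  · intro perfect φ hφ
    simpa only [eq_iff hφ, LinearMap.comp_apply] using perfect (T ∘ₗ φ)

variable [Module A W]

variable (A) in
/-- `A`-bilinear pairings for which `r` acting on the first variable is adjoint to `σ r` acting on
the second; for an involution `σ` these are the `σ`-adjoint pairings. -/
def IsAdjointPairing (σ : R → R) (b : W → V → B) : Prop :=
  (∀ x x' y, b (x + x') y = b x y + b x' y) ∧
  (∀ x y y', b x (y + y') = b x y + b x y') ∧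
  (∀ (a : A) (x : W) (y : V), b (a • x) y = a • b x y) ∧
  (∀ (a : A) (x : W) (y : V), b x (a • y) = a • b x y) ∧
  (∀ (r : R) (x : W) (y : V), b (r • x) y = b x (σ r • y))

theorem IsSemilinearPairing.isAdjointPairing_comp [IsScalarTower A R W] {ι : R ≃ₐ[A] R}
    {e : W → V → M} (he : IsSemilinearPairing ι e) (T : M →ₗ[A] B) :
    IsAdjointPairing A ι.symm fun x y => T (e x y) := by
  obtain ⟨add_left, add_right, smul_left, smul_right⟩ := he
  have smul_left_base (a : A) (x : W) (y : V) : e (a • x) y = a • e x y := by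
    simpa only [algebraMap_smul] using smul_left (algebraMap A R a) x y
  have smul_right_base (a : A) (x : W) (y : V) : e x (a • y) = a • e x y := by
    simpa only [AlgEquiv.commutes, algebraMap_smul] using smul_right (algebraMap A R a) x y
  refine ⟨fun x x' y => ?_, fun x y y' => ?_, fun a x y => ?_, fun a x y => ?_, fun r x y => ?_⟩
  · simp only [add_left, map_add]
  · simp only [add_right, map_add]
  · simp only [smul_left_base, map_smul]
  · simp only [smul_right_base, map_smul]
  · simp only [smul_left, smul_right, AlgEquiv.apply_symm_apply]

theorem IsAdjointPairing.exists_isSemilinearPairing {T : M →ₗ[A] B}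
    (hT : Bijective (coextend R T)) {ι : R ≃ₐ[A] R} {b : W → V → B}
    (hb : IsAdjointPairing A ι.symm b) :
    ∃ e : W → V → M, IsSemilinearPairing ι e ∧ (fun x y => T (e x y)) = b := by
  obtain ⟨add_left, add_right, -, smul_right, adjoint⟩ := hb
  choose e he hTe using fun x => exists_semilinear_lift_of_coextend_bijective hT ι
    { toFun := b x, map_add' := add_right x, map_smul' := fun a => smul_right a x }
  replace hTe (x : W) (y : V) : T (e x y) = b x y := hTe x y
  refine ⟨fun x => e x, ⟨fun x x' => congr_fun ?_, fun x => map_add (e x),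
    fun r x => congr_fun ?_, fun r x => he x r⟩, funext₂ hTe⟩
  · refine semilinear_ext_of_coextend_injective hT.1 ι.surjective (he _) (fun r y => ?_)
      fun y => ?_
    · simp only [he, smul_add]
    · rw [map_add, hTe, hTe, hTe, add_left]
  · refine semilinear_ext_of_coextend_injective hT.1 ι.surjective (he _) (fun s y => ?_)
      fun y => ?_
    · simp only [he, smul_comm r]
    · rw [hTe, adjoint, ← hTe, he, AlgEquiv.apply_symm_apply]

theorem bijOn_comp_of_coextend_bijective [IsScalarTower A R W] {T : M →ₗ[A] B}
    (hT : Bijective (coextend R T)) (ι : R ≃ₐ[A] R) :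
    Set.BijOn (fun (e : W → V → M) x y => T (e x y))
      {e | IsSemilinearPairing ι e} {b | IsAdjointPairing A ι.symm b} := by
  refine ⟨fun e he => he.isAdjointPairing_comp T, ?_,
    fun b hb => hb.exists_isSemilinearPairing hT⟩
  rintro e ⟨-, -, -, he⟩ e' ⟨-, -, -, he'⟩ h
  funext x
  exact semilinear_ext_of_coextend_injective hT.1 ι.surjective (he · x) (he' · x)
    fun y => congr_fun₂ h x y

theorem stmt_5_general [Module.Projective A R] [Module.Finite A R] [IsScalarTower A R W]
    (τ : R →ₗ[A] A) (hτ : Bijective fun r : R => τ ∘ₗ LinearMap.mul A R r) (ι : R ≃ₐ[A] R) :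
    Set.BijOn
      (fun (e : W → V → R ⊗[A] B) x y => TensorProduct.lid A B (τ.rTensor B (e x y)))
      {e | IsSemilinearPairing ι e} {b | IsAdjointPairing A ι.symm b} ∧
    ∀ e : W → V → R ⊗[A] B, IsSemilinearPairing ι e →
      (IsSemilinearPerfect A ι e ↔
        IsLinearPerfect A fun x y => TensorProduct.lid A B (τ.rTensor B (e x y))) := by
  have coextend_τ : ⇑(coextend R τ) = fun r : R => τ ∘ₗ LinearMap.mul A R r := by
    ext r s
    simp [mul_comm]
  have hT := coextend_lid_comp_rTensor_bijective (B := B) (coextend_τ ▸ hτ)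
  exact ⟨bijOn_comp_of_coextend_bijective hT ι, fun e he => he.isSemilinearPerfect_iff hT⟩

end Pairing

/-- With `R/A` and a perfect trace form `τ` as in Statement 4, and an
`A`-algebra involution `ι` of `R`: composition with `τ ⊗ id_B` is a bijection from
the set of `R`-semilinear pairings `W × W → R ⊗_A B` onto the set of `ι`-adjoint
pairings `W × W → B`, and an `R`-semilinear pairing is perfect if and only if the
corresponding `ι`-adjoint pairing is perfect. -/
theorem stmt_5
    (A : Type) [CommRing A]
    (R : Type) [CommRing R] [Algebra A R]
    [Module.Free A R] [Module.Finite A R]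
    (τ : R →ₗ[A] A)
    (hτ : Function.Bijective fun r : R => τ ∘ₗ LinearMap.mul A R r)
    (ι : R ≃ₐ[A] R) (hι : ∀ r, ι (ι r) = r)
    (W : Type) [AddCommGroup W] [Module A W] [Module R W] [IsScalarTower A R W]
    (B : Type) [AddCommGroup B] [Module A B] :
    (Set.BijOn
      (fun (e : W → W → R ⊗[A] B) (x y : W) =>
        (TensorProduct.lid A B) (LinearMap.rTensor B τ (e x y)))
      -- `R`-semilinear pairings
      {e | (∀ x x' y, e (x + x') y = e x y + e x' y) ∧
           (∀ x y y', e x (y + y') = e x y + e x y') ∧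
           (∀ (r : R) (x y : W), e (r • x) y = r • e x y) ∧
           (∀ (r : R) (x y : W), e x (r • y) = ι r • e x y)}
      -- `ι`-adjoint pairings
      {b | (∀ x x' y, b (x + x') y = b x y + b x' y) ∧
           (∀ x y y', b x (y + y') = b x y + b x y') ∧
           (∀ (a : A) (x y : W), b (a • x) y = a • b x y) ∧
           (∀ (a : A) (x y : W), b x (a • y) = a • b x y) ∧
           (∀ (r : R) (x y : W), b (r • x) y = b x (ι r • y))}) ∧
    (∀ e : W → W → R ⊗[A] B,
      ((∀ x x' y, e (x + x') y = e x y + e x' y) ∧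
       (∀ x y y', e x (y + y') = e x y + e x y') ∧
       (∀ (r : R) (x y : W), e (r • x) y = r • e x y) ∧
       (∀ (r : R) (x y : W), e x (r • y) = ι r • e x y)) →
      -- `e` is perfect, i.e. `x ↦ e(x,·)` is a bijection of `W` onto
      -- `Hom_R(W^ι, R ⊗_A B)` ...
      ((∀ φ : W →ₗ[A] R ⊗[A] B,
          (∀ (r : R) (y : W), φ (r • y) = ι r • φ y) →
          ∃! x : W, ∀ y, e x y = φ y)
        ↔
      -- ... iff the corresponding `ι`-adjoint pairing is perfect, i.e.
      -- `x ↦ b(x,·)` is a bijection of `W` onto `Hom_A(W, B)`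
       (∀ ψ : W →ₗ[A] B, ∃! x : W, ∀ y,
          (TensorProduct.lid A B) (LinearMap.rTensor B τ (e x y)) = ψ y))) := by
  have symm_eq : ι.symm = ι := AlgEquiv.ext fun r => ι.symm_apply_eq.2 (hι r).symm
  have general := stmt_5_general (W := W) (V := W) (B := B) τ hτ ι
  rwa [symm_eq] at general
end

section
/- Let p be an odd prime and let M be a 2×2 matrix over 𝔽_p with det M = −1. Then the 𝔽_p-dimension of the kernel of M² − I (the eigenspace of M² for the eigenvalue 1) is even; that is, it equals 0 or 2. -/
/-!
By Cayley–Hamilton, a `2 × 2` matrix satisfies `M² + det M = (tr M) M`. If `det M ≠ 0`, the kernel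
of the right-hand side is everything when `tr M = 0` and zero otherwise.
-/

section

variable {n R : Type*} [Fintype n] [DecidableEq n] [CommRing R]

lemma sq_add_det_smul_one_eq_trace_smul_of_card_eq_two (hn : Fintype.card n = 2)
    (M : Matrix n n R) : M ^ 2 + M.det • 1 = M.trace • M := by
  nontriviality R
  have cayley_hamilton := M.aeval_self_charpoly
  rw [M.charpoly_of_card_eq_two hn] at cayley_hamilton
  simp only [map_add, map_sub, map_mul, map_pow, Polynomial.aeval_X, Polynomial.aeval_C,
    Algebra.algebraMap_eq_smul_one, smul_mul_assoc, one_mul] at cayley_hamilton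
  rwa [sub_add_eq_add_sub, sub_eq_zero] at cayley_hamilton

variable [IsDomain R]

lemma ker_toLin'_smul_eq_bot {c : R} {M : Matrix n n R} (hc : c ≠ 0) (hM : M.det ≠ 0) :
    LinearMap.ker (Matrix.toLin' (c • M)) = ⊥ := by
  have hdet : (c • M).det ≠ 0 := by
    rw [Matrix.det_smul]
    exact mul_ne_zero (pow_ne_zero _ hc) hM
  exact LinearMap.ker_eq_bot'.mpr fun _ ↦ Matrix.eq_zero_of_mulVec_eq_zero hdet

theorem stmt_8_general (hn : Fintype.card n = 2) (M : Matrix n n R) (hM : M.det ≠ 0) :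
    Even (Module.finrank R (LinearMap.ker (Matrix.toLin' (M ^ 2 + M.det • 1)))) := by
  rw [sq_add_det_smul_one_eq_trace_smul_of_card_eq_two hn]
  by_cases htrace : M.trace = 0
  · rw [htrace, zero_smul, map_zero, LinearMap.ker_zero, finrank_top, Module.finrank_pi, hn]
    exact even_two
  · rw [ker_toLin'_smul_eq_bot htrace hM, finrank_bot]
    exact Even.zero

end

/-- If `p` is an odd prime and `M` is a `2×2` matrix over `𝔽_p`
with `det M = −1`, then the dimension of `ker (M² − I)` is even. -/
theorem stmt_8 (p : ℕ) [Fact p.Prime] (hodd : Odd p)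
    (M : Matrix (Fin 2) (Fin 2) (ZMod p)) (hdet : M.det = -1) :
    Even (Module.finrank (ZMod p) (LinearMap.ker (Matrix.toLin' (M ^ 2 - 1)))) := by
  have heven := stmt_8_general (Fintype.card_fin 2) M (by simp [hdet])
  rwa [hdet, neg_one_smul, ← sub_eq_add_neg] at heven
end

section
/- Let m be an odd positive integer, let k be a field of characteristic zero, let V be a finite-dimensional k-vector space, and let ρ be a k-linear representation of the dihedral group G of order 2m on V. If the subspace of vectors fixed by ρ(g) for every g in the rotation subgroup of G is zero, then dim_k V is even. -/
/-!
Two reflections `s`, `t` whose product is a generating rotation are conjugate, since `m` is odd.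
For each sign `ε = ±1`, a common `ε`-eigenvector of `s` and `t` is fixed by the rotation `s * t`,
so their `ε`-eigenspaces meet trivially; these have the same dimension, which is therefore at most
half of `dim V`. On the other hand `s ^ 2 = 1` puts the range of `s - 1` inside the
`(-1)`-eigenspace of `s`, so the `1`- and `(-1)`-eigenspaces of `s` have dimensions adding up to at
least `dim V`, even in characteristic `2`, where the two coincide. Hence both dimensions are exactly
half of `dim V`.
-/

open Module Module.End

section Eigenspace

variable {R M : Type*} [CommRing R] [AddCommGroup M] [Module R M] {f g : End R M}

lemma range_sub_one_le_eigenspace_neg_one (hf : f * f = 1) :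
    LinearMap.range (f - 1) ≤ f.eigenspace (-1) := by
  rintro _ ⟨v, rfl⟩
  have hffv : f (f v) = v := LinearMap.congr_fun hf v
  simp [hffv]

lemma finrank_eigenspace_eq_of_isConj (hfg : IsConj f g) (μ : R) :
    finrank R (f.eigenspace μ) = finrank R (g.eigenspace μ) := by
  obtain ⟨c, hc⟩ := hfg
  let e : M ≃ₗ[R] M := LinearMap.GeneralLinearGroup.generalLinearEquiv R M c
  have he (v : M) : e (f v) = g (e v) := LinearMap.congr_fun hc v
  have hmap : (f.eigenspace μ).map (e : M →ₗ[R] M) = g.eigenspace μ := by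
    ext v
    obtain ⟨w, rfl⟩ := e.surjective v
    rw [Submodule.mem_map_equiv, e.symm_apply_apply, mem_eigenspace_iff, mem_eigenspace_iff,
      ← he, ← map_smul, e.injective.eq_iff]
  rw [← hmap, LinearEquiv.finrank_map_eq]

lemma disjoint_eigenspace_of_mul_eq_one {μ ν : R} (hμν : μ * ν = 1)
    (hfg : ∀ v, (f * g) v = v → v = 0) :
    Disjoint (f.eigenspace μ) (g.eigenspace ν) := by
  rw [Submodule.disjoint_def]
  intro v hf hg
  rw [mem_eigenspace_iff] at hf hg
  apply hfg
  rw [mul_apply, hg, map_smul, hf, smul_smul, mul_comm, hμν, one_smul]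

end Eigenspace

section Involution

variable {K V : Type*} [Field K] [AddCommGroup V] [Module K V] [FiniteDimensional K V]
  {f g : End K V}

lemma finrank_le_finrank_eigenspace_one_add_neg_one (hf : f * f = 1) :
    finrank K V ≤ finrank K (f.eigenspace 1) + finrank K (f.eigenspace (-1)) := by
  have hker : f.eigenspace 1 = LinearMap.ker (f - 1) := by rw [eigenspace_def, one_smul]
  calc
    finrank K V = finrank K (LinearMap.ker (f - 1)) + finrank K (LinearMap.range (f - 1)) := by
      rw [add_comm, LinearMap.finrank_range_add_finrank_ker]
    _ ≤ finrank K (f.eigenspace 1) + finrank K (f.eigenspace (-1)) := by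
      rw [hker]
      gcongr
      exact Submodule.finrank_mono (range_sub_one_le_eigenspace_neg_one hf)

lemma two_mul_finrank_eigenspace_le (hconj : IsConj f g) {μ : K}
    (hdisj : Disjoint (f.eigenspace μ) (g.eigenspace μ)) :
    2 * finrank K (f.eigenspace μ) ≤ finrank K V := by
  calc
    2 * finrank K (f.eigenspace μ) = finrank K (f.eigenspace μ) + finrank K (g.eigenspace μ) := by
      rw [two_mul, ← finrank_eigenspace_eq_of_isConj hconj]
    _ ≤ finrank K V := Submodule.finrank_add_finrank_le_of_disjoint hdisj

theorem finrank_eq_two_mul_finrank_eigenspace_one (hf : f * f = 1) (hconj : IsConj f g)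
    (hfg : ∀ v, (f * g) v = v → v = 0) :
    finrank K V = 2 * finrank K (f.eigenspace 1) := by
  have hadd := finrank_le_finrank_eigenspace_one_add_neg_one hf
  have hone : 2 * finrank K (f.eigenspace 1) ≤ finrank K V :=
    two_mul_finrank_eigenspace_le hconj (disjoint_eigenspace_of_mul_eq_one (one_mul 1) hfg)
  have hneg : 2 * finrank K (f.eigenspace (-1)) ≤ finrank K V :=
    two_mul_finrank_eigenspace_le hconj (disjoint_eigenspace_of_mul_eq_one (by simp) hfg)
  omega

end Involution

lemma isConj_sr_of_odd {m : ℕ} (hm : Odd m) (i j : ZMod m) :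
    IsConj (DihedralGroup.sr i) (DihedralGroup.sr j) := by
  have htwo : IsUnit (2 : ZMod m) := by
    exact_mod_cast (ZMod.isUnit_iff_coprime 2 m).mpr hm.coprime_two_left
  obtain ⟨a, ha⟩ := Even.of_isUnit_two htwo (i - j)
  refine isConj_iff.mpr ⟨DihedralGroup.r a, ?_⟩
  rw [DihedralGroup.r_mul_sr, DihedralGroup.inv_r, DihedralGroup.sr_mul_r]
  congr 1
  linear_combination ha

lemma representation_zpow_apply_eq_self {k G V : Type*} [CommSemiring k] [Group G] [AddCommMonoid V]
    [Module k V] (ρ : Representation k G V) {g : G} {v : V} (hg : ρ g v = v) (n : ℤ) :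
    ρ (g ^ n) v = v := by
  let _ : MulAction G V := MulAction.compHom V ρ
  exact zpow_mem (show g ∈ MulAction.stabilizer G v from hg) n

theorem stmt_12_general (m : ℕ) (hodd : Odd m) {k V : Type*} [Field k] [AddCommGroup V]
    [Module k V] [FiniteDimensional k V] (ρ : Representation k (DihedralGroup m) V)
    (hfix : ∀ v : V, (∀ i : ZMod m, ρ (DihedralGroup.r i) v = v) → v = 0) :
    Even (finrank k V) := by
  have hinvol : ρ (DihedralGroup.sr 0) * ρ (DihedralGroup.sr 0) = 1 := by
    rw [← map_mul, DihedralGroup.sr_mul_self, map_one]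
  have hconj : IsConj (ρ (DihedralGroup.sr 0)) (ρ (DihedralGroup.sr 1)) :=
    MonoidHom.map_isConj ρ (isConj_sr_of_odd hodd 0 1)
  have hfree (v : V) (hv : (ρ (DihedralGroup.sr 0) * ρ (DihedralGroup.sr 1)) v = v) : v = 0 := by
    rw [← map_mul, DihedralGroup.sr_mul_sr, sub_zero] at hv
    refine hfix v fun i ↦ ?_
    obtain ⟨n, rfl⟩ := ZMod.intCast_surjective i
    rw [← DihedralGroup.r_one_zpow]
    exact representation_zpow_apply_eq_self ρ hv n
  rw [finrank_eq_two_mul_finrank_eigenspace_one hinvol hconj hfree]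
  exact even_two_mul _

/-- Let `m` be odd and positive, `k` a field of characteristic
zero, and `ρ` a representation of the dihedral group of order `2m` on a
finite-dimensional `k`-vector space `V`.  If the only vector fixed by all the
rotations is `0`, then `dim_k V` is even. -/
theorem stmt_12 (m : ℕ) (hm : 0 < m) (hodd : Odd m)
    (k : Type) [Field k] [CharZero k]
    (V : Type) [AddCommGroup V] [Module k V] [FiniteDimensional k V]
    (ρ : Representation k (DihedralGroup m) V)
    (hfix : ∀ v : V, (∀ i : ZMod m, ρ (DihedralGroup.r i) v = v) → v = 0) :
    Even (Module.finrank k V) := by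
  exact stmt_12_general m hodd ρ hfix
end
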